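/- arXiv:1204.5510 — 5 statements merged into one kernel-verified Lean document; each statement's English description precedes it below -/
import Mathlib

section
/- Let u_max, ρ_max, β > 0, let U(ρ) = u_max·(1 − ρ/ρ_max) and let p(ρ) = −β·(ρ/ρ_max + log(1 − ρ/ρ_max)) for 0 < ρ < ρ_max. Then for every ρ ∈ (0, ρ_max): (i) p'(ρ) = β·ρ/(ρ_max·(ρ_max − ρ)), and the stability condition p'(ρ)/ρ² > (U'(ρ))² is equivalent to (ρ/ρ_max)·(1 − ρ/ρ_max) < β/(ρ_max·u_max²); (ii) consequently the stability condition fails at ρ if and only if (ρ − ρ_max/2)² ≤ (ρ_max/2)² − β·ρ_max/u_max², so the set of unstable densities is an interval centered at ρ_max/2. -/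
/-- Payne–Whitham model with linear desired velocity and the singular logarithmic
pressure `p(ρ) = −β·(ρ/ρ_max + log(1 − ρ/ρ_max))` on `(0, ρ_max)`:
(i) `p'(ρ) = β·ρ/(ρ_max·(ρ_max − ρ))` and the stability condition is equivalent
to `(ρ/ρ_max)·(1 − ρ/ρ_max) < β/(ρ_max·u_max²)`;
(ii) the stability condition fails iff
`(ρ − ρ_max/2)² ≤ (ρ_max/2)² − β·ρ_max/u_max²`, so the unstable densities form
an interval centered at `ρ_max/2`. -/
theorem pw_singular_pressure_stability (u_max ρ_max β : ℝ)
    (hu : 0 < u_max) (hρm : 0 < ρ_max) (hβ : 0 < β)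
    (U p : ℝ → ℝ)
    (hU : U = fun ρ => u_max * (1 - ρ / ρ_max))
    (hp : p = fun ρ => -β * (ρ / ρ_max + Real.log (1 - ρ / ρ_max))) :
    ∀ ρ : ℝ, 0 < ρ → ρ < ρ_max →
      (deriv p ρ = β * ρ / (ρ_max * (ρ_max - ρ))) ∧
      (deriv p ρ / ρ ^ 2 > (deriv U ρ) ^ 2 ↔
        (ρ / ρ_max) * (1 - ρ / ρ_max) < β / (ρ_max * u_max ^ 2)) ∧
      (¬ (deriv p ρ / ρ ^ 2 > (deriv U ρ) ^ 2) ↔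
        (ρ - ρ_max / 2) ^ 2 ≤ (ρ_max / 2) ^ 2 - β * ρ_max / u_max ^ 2) := by
  intro ρ h0 h1
  have hd : 0 < ρ_max - ρ := sub_pos.2 h1
  have hq : 1 - ρ / ρ_max = (ρ_max - ρ) / ρ_max := by field_simp
  have hne : 1 - ρ / ρ_max ≠ 0 := by rw [hq]; positivity
  have hlin : HasDerivAt (fun x : ℝ => x / ρ_max) (1 / ρ_max) ρ :=
    (hasDerivAt_id ρ).div_const ρ_max
  have hone : HasDerivAt (fun x : ℝ => 1 - x / ρ_max) (-(1 / ρ_max)) ρ :=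
    hlin.const_sub 1
  have hdU : deriv U ρ = u_max * (-(1 / ρ_max)) := by
    rw [hU]; exact (hone.const_mul u_max).deriv
  have hdp : deriv p ρ = β * ρ / (ρ_max * (ρ_max - ρ)) := by
    rw [hp]
    have h : deriv (fun x : ℝ => -β * (x / ρ_max + Real.log (1 - x / ρ_max))) ρ
        = -β * (1 / ρ_max + -(1 / ρ_max) / (1 - ρ / ρ_max)) :=
      ((hlin.add (hone.log hne)).const_mul (-β)).deriv
    rw [h, hq]
    field_simp
    ring
  have key : deriv p ρ / ρ ^ 2 > (deriv U ρ) ^ 2 ↔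
      u_max ^ 2 * (ρ * (ρ_max - ρ)) < β * ρ_max := by
    rw [hdp, hdU, gt_iff_lt, ← sub_pos, ← sub_pos (a := β * ρ_max)]
    have e : β * ρ / (ρ_max * (ρ_max - ρ)) / ρ ^ 2 - (u_max * (-(1 / ρ_max))) ^ 2
        = (β * ρ_max - u_max ^ 2 * (ρ * (ρ_max - ρ))) / (ρ_max ^ 2 * (ρ * (ρ_max - ρ))) := by
      field_simp
    rw [e]
    exact div_pos_iff_of_pos_right (by positivity)
  refine ⟨hdp, ?_, ?_⟩
  · rw [key, ← sub_pos, ← sub_pos (b := ρ / ρ_max * _)]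
    have e : β / (ρ_max * u_max ^ 2) - ρ / ρ_max * (1 - ρ / ρ_max)
        = (β * ρ_max - u_max ^ 2 * (ρ * (ρ_max - ρ))) / (ρ_max ^ 2 * u_max ^ 2) := by
      field_simp
    rw [e]
    exact (div_pos_iff_of_pos_right (by positivity)).symm
  · rw [key, not_lt]
    have hu2 : 0 < u_max ^ 2 := by positivity
    rw [le_sub_comm, div_le_iff₀ hu2]
    have e : ((ρ_max / 2) ^ 2 - (ρ - ρ_max / 2) ^ 2) * u_max ^ 2
        = u_max ^ 2 * (ρ * (ρ_max - ρ)) := by ring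
    rw [e]
end

section
/- Let ρ > 0, set v = 1/ρ, and let Û(w) = U(1/w), p̂(w) = p(1/w). Assume U is differentiable at ρ with U'(ρ) < 0 and p is differentiable at ρ with p'(ρ) > 0, and let m = √(−p̂'(v)). Then the jamiton-existence condition for the Payne–Whitham model, Û'(v) > m, holds if and only if the stability condition fails strictly at ρ, i.e., if and only if p'(ρ)/ρ² < (U'(ρ))². -/
/-- Payne–Whitham model in Lagrangian variables: for `ρ > 0`, `v = 1/ρ`,
`Û(w) = U(1/w)`, `p̂(w) = p(1/w)` and `m = √(−p̂'(v))`, the jamiton-existence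
condition `Û'(v) > m` holds iff the stability condition fails strictly at `ρ`,
i.e. iff `p'(ρ)/ρ² < (U'(ρ))²`. -/
theorem pw_jamiton_existence_iff_instability (U p : ℝ → ℝ) (ρ Ud pd : ℝ)
    (hρ : 0 < ρ)
    (hU : HasDerivAt U Ud ρ) (hUd : Ud < 0)
    (hp : HasDerivAt p pd ρ) (hpd : 0 < pd) :
    (deriv (fun w => U (1 / w)) (1 / ρ) >
        Real.sqrt (-(deriv (fun w => p (1 / w)) (1 / ρ)))) ↔
      pd / ρ ^ 2 < Ud ^ 2 := by
  have key : ∀ (f : ℝ → ℝ) (d : ℝ), HasDerivAt f d ρ →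
      deriv (fun w => f (1 / w)) (1 / ρ) = -(d * ρ ^ 2) := by
    intro f d hf
    have hne : (1 / ρ) ≠ 0 := by positivity
    have h1 : HasDerivAt (fun w : ℝ => 1 / w) (-((1 / ρ) ^ 2)⁻¹) (1 / ρ) := by
      simpa only [one_div] using hasDerivAt_inv hne
    have h2 : HasDerivAt f d (1 / (1 / ρ)) := by
      rw [one_div_one_div]
      exact hf
    have h3 := (HasDerivAt.comp (1 / ρ) h2 h1).deriv
    refine Eq.trans h3 ?_
    field_simp
  rw [key U Ud hU, key p pd hp, neg_neg, gt_iff_lt]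
  have hρ2 : 0 < ρ ^ 2 := by positivity
  have hpos : 0 < -(Ud * ρ ^ 2) := by nlinarith
  rw [Real.sqrt_lt' hpos, div_lt_iff₀ hρ2]
  have e : (-(Ud * ρ ^ 2)) ^ 2 = (Ud ^ 2 * ρ ^ 2) * ρ ^ 2 := by ring
  rw [e]
  exact mul_lt_mul_iff_left₀ hρ2
end

section
/- Let I ⊆ (0,∞) be an open interval, let p̂ : I → ℝ be twice differentiable with p̂'(v) < 0 and p̂''(v) > 0 for all v ∈ I, and let Û : I → ℝ be differentiable. Define m(v) = √(−p̂'(v)) and s(v) = Û(v) − m(v)·v. Then for every v ∈ I with Û'(v) > m(v), the function s is differentiable at v with s'(v) > 0. Consequently, for the Payne–Whitham model, along the family of jamitons parameterized by the sonic specific volume v_S, the Eulerian jamiton propagation speed s strictly increases with v_S, i.e., strictly decreases with the sonic density ρ_S = 1/v_S. -/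
/-- Payne–Whitham model: on an open interval `I ⊆ (0,∞)`, with `p̂` twice
differentiable satisfying `p̂' < 0`, `p̂'' > 0` on `I` and `Û` differentiable,
define `m(v) = √(−p̂'(v))` and `s(v) = Û(v) − m(v)·v`. Then wherever the
jamiton-existence condition `Û'(v) > m(v)` holds, `s` is differentiable with
`s'(v) > 0`: the jamiton propagation speed strictly increases with the sonic
specific volume (i.e. strictly decreases with the sonic density). -/
theorem pw_jamiton_speed_monotone (I : Set ℝ) (hIo : IsOpen I)
    (hIc : Convex ℝ I) (hIsub : I ⊆ Set.Ioi (0 : ℝ))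
    (phat Uhat : ℝ → ℝ)
    (hd1 : ∀ v ∈ I, DifferentiableAt ℝ phat v)
    (hd2 : ∀ v ∈ I, DifferentiableAt ℝ (deriv phat) v)
    (hp' : ∀ v ∈ I, deriv phat v < 0)
    (hp'' : ∀ v ∈ I, 0 < deriv (deriv phat) v)
    (hUd : ∀ v ∈ I, DifferentiableAt ℝ Uhat v) :
    ∀ v ∈ I, deriv Uhat v > Real.sqrt (-(deriv phat v)) →
      DifferentiableAt ℝ (fun x => Uhat x - Real.sqrt (-(deriv phat x)) * x) v ∧
      0 < deriv (fun x => Uhat x - Real.sqrt (-(deriv phat x)) * x) v := by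
  intro v hv hU
  have hneg : 0 < -(deriv phat v) := neg_pos.mpr (hp' v hv)
  have hvpos : 0 < v := hIsub hv
  have h1 : HasDerivAt (fun x => Real.sqrt (-(deriv phat x)))
      (-(deriv (deriv phat) v) / (2 * Real.sqrt (-(deriv phat v)))) v :=
    (hd2 v hv).hasDerivAt.fun_neg.sqrt hneg.ne'
  have h2 := (hUd v hv).hasDerivAt.fun_sub (h1.fun_mul (hasDerivAt_id' v))
  refine ⟨h2.differentiableAt, ?_⟩
  rw [h2.deriv]
  have hs : 0 < Real.sqrt (-(deriv phat v)) := Real.sqrt_pos.mpr hneg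
  have h3 : 0 < deriv (deriv phat) v / (2 * Real.sqrt (-(deriv phat v))) * v :=
    mul_pos (div_pos (hp'' v hv) (by linarith)) hvpos
  rw [neg_div, neg_mul]
  linarith
end

section
/- Let I ⊆ (0,∞) be an open interval, let ĥ : I → ℝ be twice differentiable with ĥ'(v) < 0 and ĥ''(v) > 0 for all v ∈ I, and let Û : I → ℝ be differentiable. Define m(v) = −ĥ'(v) and s(v) = Û(v) − m(v)·v. Then for every v ∈ I with Û'(v) > m(v), the function s is differentiable at v with s'(v) > 0. Consequently, for the Aw–Rascle–Zhang model, along the family of jamitons parameterized by the sonic specific volume v_S, the Eulerian jamiton propagation speed s strictly increases with v_S, i.e., strictly decreases with the sonic density ρ_S = 1/v_S. -/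
/-- Aw–Rascle–Zhang model: on an open interval `I ⊆ (0,∞)`, with `ĥ` twice
differentiable satisfying `ĥ' < 0`, `ĥ'' > 0` on `I` and `Û` differentiable,
define `m(v) = −ĥ'(v)` and `s(v) = Û(v) − m(v)·v`. Then wherever the
jamiton-existence condition `Û'(v) > m(v)` holds, `s` is differentiable with
`s'(v) > 0`: the jamiton propagation speed strictly increases with the sonic
specific volume (i.e. strictly decreases with the sonic density). -/
theorem arz_jamiton_speed_monotone (I : Set ℝ) (hIo : IsOpen I)
    (hIc : Convex ℝ I) (hIsub : I ⊆ Set.Ioi (0 : ℝ))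
    (hhat Uhat : ℝ → ℝ)
    (hd1 : ∀ v ∈ I, DifferentiableAt ℝ hhat v)
    (hd2 : ∀ v ∈ I, DifferentiableAt ℝ (deriv hhat) v)
    (hh' : ∀ v ∈ I, deriv hhat v < 0)
    (hh'' : ∀ v ∈ I, 0 < deriv (deriv hhat) v)
    (hUd : ∀ v ∈ I, DifferentiableAt ℝ Uhat v) :
    ∀ v ∈ I, deriv Uhat v > -(deriv hhat v) →
      DifferentiableAt ℝ (fun x => Uhat x - (-(deriv hhat x)) * x) v ∧
      0 < deriv (fun x => Uhat x - (-(deriv hhat x)) * x) v := by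
  intro v hv hU
  have hs : HasDerivAt (fun x => Uhat x - (-(deriv hhat x)) * x)
      (deriv Uhat v - (-(deriv (deriv hhat) v) * v + -(deriv hhat v) * 1)) v :=
    (hUd v hv).hasDerivAt.sub ((hd2 v hv).hasDerivAt.neg.mul (hasDerivAt_id v))
  refine ⟨hs.differentiableAt, ?_⟩
  rw [hs.deriv]
  have hpos : 0 < deriv (deriv hhat) v * v := mul_pos (hh'' v hv) (hIsub hv)
  linarith
end

section
/- Let I ⊆ ℝ be an open interval and v⁺ < v_S < v⁻ points of I. Let r : I → ℝ be continuously differentiable with r'(v_S) = 0, r'(v) < 0 for v ∈ [v⁺, v_S), and r'(v) > 0 for v ∈ (v_S, v⁻]. Let w : I → ℝ be differentiable and strictly concave with w(v_S) = 0, w'(v_S) > 0, and w(v) > 0 for v ∈ (v_S, v⁻]. Define f : [v⁺, v⁻] → ℝ by f(v) = (v − v_S)·r'(v)/w(v) for v ≠ v_S and f(v_S) = 0. Then f is continuous on [v⁺, v⁻], nonnegative is not claimed pointwise, but its integral satisfies ∫_{v⁺}^{v⁻} f(v) dv ≥ 0; equivalently, ∫_{v⁺}^{v⁻} v·r'(v)/w(v)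 dv ≥ v_S · ∫_{v⁺}^{v⁻} r'(v)/w(v) dv, i.e., the mean specific volume L/N of the jamiton is at least the sonic specific volume v_S. Consequently the average density of the jamiton is at most the sonic density, so the effective flow rate of a periodic chain of identical jamitons is lower than the flow rate of the uniform base state with the same average density. -/
/-- Effective flow rate theorem: for a jamiton connecting `v⁺ < v_S < v⁻`
(with the shock condition `r(v⁺) = r(v⁻)`), the function
`f(v) = (v − v_S)·r'(v)/w(v)` (with `f(v_S) = 0`) is continuous on
`[v⁺, v⁻]` and has nonnegative integral; equivalently
`∫ v·r'/w ≥ v_S·∫ r'/w`, i.e. the mean specific volume `L/N` of the jamiton is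
at least the sonic specific volume `v_S`, so the average density is at most the
sonic density and the effective flow rate of a periodic chain of identical
jamitons is lower than that of the uniform base state of the same average
density. -/
theorem effective_flow_rate (I : Set ℝ) (hIo : IsOpen I) (hIc : Convex ℝ I)
    (vp vS vm : ℝ) (hvp : vp ∈ I) (hvS : vS ∈ I) (hvm : vm ∈ I)
    (h1 : vp < vS) (h2 : vS < vm)
    (r w : ℝ → ℝ)
    (hrd : ∀ v ∈ I, DifferentiableAt ℝ r v)
    (hrc : ContinuousOn (deriv r) I)
    (hrS : deriv r vS = 0)
    (hrneg : ∀ v ∈ Set.Ico vp vS, deriv r v < 0)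
    (hrpos : ∀ v ∈ Set.Ioc vS vm, 0 < deriv r v)
    (hshock : r vp = r vm)
    (hwd : ∀ v ∈ I, DifferentiableAt ℝ w v)
    (hwconc : StrictConcaveOn ℝ I w)
    (hwS : w vS = 0) (hwS' : 0 < deriv w vS)
    (hwpos : ∀ v ∈ Set.Ioc vS vm, 0 < w v) :
    ContinuousOn (fun v => if v = vS then 0 else (v - vS) * deriv r v / w v)
      (Set.Icc vp vm) ∧
    0 ≤ (∫ v in vp..vm, if v = vS then 0 else (v - vS) * deriv r v / w v) ∧
    vS * (∫ v in vp..vm, deriv r v / w v) ≤ ∫ v in vp..vm, v * deriv r v / w v := by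
  have hsub : Set.Icc vp vm ⊆ I := hIc.ordConnected.out hvp hvm
  have hle : vp ≤ vm := (h1.trans h2).le
  have hcc := hwconc.concaveOn
  set c := deriv w vS with hc
  have hslope : ∀ v, v ≠ vS → dslope w vS v = w v / (v - vS) := by
    intro v hv
    rw [dslope_of_ne _ hv, slope_def_field, hwS, sub_zero]
  have hleft : ∀ v ∈ Set.Ico vp vS, c ≤ dslope w vS v := by
    intro v hv
    rw [dslope_of_ne _ hv.2.ne, slope_comm]
    exact hcc.deriv_le_slope (hsub ⟨hv.1, (hv.2.trans h2).le⟩) hvS hv.2 (hwd _ hvS)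
  have hright : ∀ v ∈ Set.Ioc vS vm, dslope w vS v ≤ c := by
    intro v hv
    rw [dslope_of_ne _ hv.1.ne']
    exact hcc.slope_le_deriv hvS (hsub ⟨(h1.trans hv.1).le, hv.2⟩) hv.1 (hwd _ hvS)
  have hpos : ∀ v ∈ Set.Icc vp vm, 0 < dslope w vS v := by
    intro v hv
    rcases lt_trichotomy v vS with h | h | h
    · exact hwS'.trans_le (hleft v ⟨hv.1, h⟩)
    · rw [h, dslope_same]; exact hwS'
    · rw [hslope v h.ne']
      exact div_pos (hwpos v ⟨h, hv.2⟩) (sub_pos.2 h)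
  have hF : (fun v => if v = vS then 0 else (v - vS) * deriv r v / w v)
      = fun v => deriv r v / dslope w vS v := by
    funext v
    split_ifs with h
    · rw [h, hrS, zero_div]
    · rw [hslope v h, div_div_eq_mul_div, mul_comm]
  have hcont : ContinuousOn (fun v => if v = vS then 0 else (v - vS) * deriv r v / w v)
      (Set.Icc vp vm) := by
    rw [hF]
    refine (hrc.mono hsub).div ?_ (fun v hv => (hpos v hv).ne')
    exact ((continuousOn_dslope (hIo.mem_nhds hvS)).2
      ⟨fun v hv => (hwd v hv).continuousAt.continuousWithinAt, hwd _ hvS⟩).mono hsub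
  have hFi : IntervalIntegrable (fun v => if v = vS then 0 else (v - vS) * deriv r v / w v)
      MeasureTheory.volume vp vm := hcont.intervalIntegrable_of_Icc hle
  have hri : IntervalIntegrable (deriv r) MeasureTheory.volume vp vm :=
    (hrc.mono hsub).intervalIntegrable_of_Icc hle
  have hnn : 0 ≤ (∫ v in vp..vm, if v = vS then 0 else (v - vS) * deriv r v / w v) := by
    have h0 : ∫ v in vp..vm, deriv r v / c = 0 := by
      rw [intervalIntegral.integral_div, intervalIntegral.integral_deriv_eq_sub _ hri, hshock,
        sub_self, zero_div]
      intro v hv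
      rw [Set.uIcc_of_le hle] at hv
      exact hrd v (hsub hv)
    refine h0.symm.le.trans ?_
    refine intervalIntegral.integral_mono_on hle (hri.div_const c) hFi ?_
    intro v hv
    rw [congrFun hF v]
    rcases lt_trichotomy v vS with h | h | h
    · have a := hleft v ⟨hv.1, h⟩
      have b := hrneg v ⟨hv.1, h⟩
      rw [div_le_div_iff₀ hwS' (hpos v hv)]
      nlinarith
    · rw [h, hrS, zero_div, zero_div]
    · have a := hright v ⟨h, hv.2⟩
      have b := hrpos v ⟨h, hv.2⟩
      rw [div_le_div_iff₀ hwS' (hpos v hv)]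
      nlinarith
  refine ⟨hcont, hnn, ?_⟩
  have hH : (fun v => v * deriv r v / w v) = fun v =>
      (if v = vS then 0 else (v - vS) * deriv r v / w v) + vS * (deriv r v / w v) := by
    funext v
    split_ifs with h
    · simp [h, hwS]
    · ring
  by_cases hg : IntervalIntegrable (fun v => deriv r v / w v) MeasureTheory.volume vp vm
  · rw [hH, intervalIntegral.integral_add hFi (hg.const_mul vS),
      intervalIntegral.integral_const_mul]
    linarith
  · -- the time integral diverges: both sides take the default value, unless `vS = 0`
    rw [intervalIntegral.integral_undef hg, mul_zero]
    by_cases hz : vS = 0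
    · have : (fun v => v * deriv r v / w v) =
          fun v => if v = vS then 0 else (v - vS) * deriv r v / w v := by
        rw [hH]
        funext v
        rw [show vS * (deriv r v / w v) = 0 by rw [hz, zero_mul], add_zero]
      rw [this]
      exact hnn
    · rw [intervalIntegral.integral_undef]
      intro hHi
      apply hg
      have h3 := (hHi.sub hFi).const_mul vS⁻¹
      refine h3.congr ?_
      intro v _
      have := congrFun hH v
      beta_reduce at this ⊢
      rw [this, add_sub_cancel_left, inv_mul_cancel_left₀ hz]
end
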